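/- arXiv:2104.05802 — 2 statements merged into one kernel-verified Lean document; each statement's English description precedes it below -/
import Mathlib

section
/- Let m, n ≥ 1, μ ∈ ℝ^m and ν ∈ ℝⁿ be probability vectors, C = (c_{ij}) ∈ ℝ^{m×n}, λ > 0. Define E(ψ) = Σ_{i=1}^m μ_i max_{1≤j≤n}(ψ_j − c_{ij}) − Σ_{j=1}^n ν_j ψ_j and E_λ(ψ) = λ Σ_{i=1}^m μ_i log(Σ_{j=1}^n e^{(ψ_j − c_{ij})/λ}) − Σ_{j=1}^n ν_j ψ_j − λ log n. If ψ* minimizes E over ℝⁿ and ψ_λ* minimizes E_λ over ℝⁿ, then |E_λ(ψ*) − E_λ(ψ_λ*)| ≤ λ log n. -/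
/-!
The log-sum-exp bounds `max f ≤ λ log ∑ⱼ exp (fⱼ / λ) ≤ max f + λ log n`, averaged against the
probability vector `μ`, give the sandwich `E_λ ≤ E ≤ E_λ + λ log n` pointwise. Hence
`E_λ(ψ*) ≤ E(ψ*) ≤ E(ψ_λ*) ≤ E_λ(ψ_λ*) + λ log n`, while `E_λ(ψ_λ*) ≤ E_λ(ψ*)` by minimality.
-/

lemma sup'_le_mul_log_sum_exp {n : ℕ} (h : (Finset.univ : Finset (Fin n)).Nonempty)
    (f : Fin n → ℝ) {lam : ℝ} (hlam : 0 < lam) :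
    Finset.univ.sup' h f ≤ lam * Real.log (∑ j, Real.exp (f j / lam)) := by
  refine Finset.sup'_le _ _ fun j _ => ?_
  have h1 : Real.exp (f j / lam) ≤ ∑ j, Real.exp (f j / lam) :=
    Finset.single_le_sum (f := fun j => Real.exp (f j / lam))
      (fun k _ => (Real.exp_pos _).le) (Finset.mem_univ j)
  have h2 := Real.log_le_log (Real.exp_pos _) h1
  rw [Real.log_exp, div_le_iff₀ hlam] at h2
  linarith

lemma mul_log_sum_exp_le {n : ℕ} (h : (Finset.univ : Finset (Fin n)).Nonempty)
    (f : Fin n → ℝ) {lam : ℝ} (hlam : 0 < lam) :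
    lam * Real.log (∑ j, Real.exp (f j / lam)) ≤
      Finset.univ.sup' h f + lam * Real.log n := by
  set M := Finset.univ.sup' h f with hM
  have hn : (n : ℝ) ≠ 0 := by
    obtain ⟨j, -⟩ := h
    exact_mod_cast (Fin.pos j).ne'
  have h1 : ∑ j, Real.exp (f j / lam) ≤ n * Real.exp (M / lam) := by
    have : ∑ j, Real.exp (f j / lam) ≤ ∑ _j : Fin n, Real.exp (M / lam) := by
      refine Finset.sum_le_sum fun j _ => Real.exp_le_exp.mpr ?_
      exact div_le_div_of_nonneg_right (Finset.le_sup' f (Finset.mem_univ j)) hlam.le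
    simpa using this
  have h2 := Real.log_le_log (Finset.sum_pos (fun j _ => Real.exp_pos (f j / lam)) h) h1
  rw [Real.log_mul hn (Real.exp_ne_zero _), Real.log_exp] at h2
  have h3 := mul_le_mul_of_nonneg_left h2 hlam.le
  rw [mul_add, mul_div_cancel₀ _ hlam.ne'] at h3
  linarith

/-- If ψ* minimizes the dual Kantorovich functional E and ψ_λ* minimizes
its Nesterov smoothing E_λ, then |E_λ(ψ*) − E_λ(ψ_λ*)| ≤ λ log n. -/
theorem smoothed_minimizer_value_close
    (m n : ℕ) (hm : 1 ≤ m) (hn : 1 ≤ n)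
    (μ : Fin m → ℝ) (ν : Fin n → ℝ)
    (hμ0 : ∀ i, 0 ≤ μ i) (hμ1 : ∑ i, μ i = 1)
    (hν0 : ∀ j, 0 ≤ ν j) (hν1 : ∑ j, ν j = 1)
    (C : Fin m → Fin n → ℝ) (lam : ℝ) (hlam : 0 < lam)
    (E Elam : (Fin n → ℝ) → ℝ)
    (hE : ∀ ψ, E ψ =
      ∑ i, μ i * Finset.univ.sup'
          (Finset.univ_nonempty_iff.mpr (Fin.pos_iff_nonempty.mp hn))
          (fun j => ψ j - C i j)
        - ∑ j, ν j * ψ j)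
    (hElam : ∀ ψ, Elam ψ =
      lam * ∑ i, μ i * Real.log (∑ j, Real.exp ((ψ j - C i j) / lam))
        - ∑ j, ν j * ψ j - lam * Real.log n)
    (ψs ψlam : Fin n → ℝ)
    (hmin : ∀ φ, E ψs ≤ E φ) (hminlam : ∀ φ, Elam ψlam ≤ Elam φ) :
    |Elam ψs - Elam ψlam| ≤ lam * Real.log n := by
  have hne : (Finset.univ : Finset (Fin n)).Nonempty :=
    Finset.univ_nonempty_iff.mpr (Fin.pos_iff_nonempty.mp hn)
  have lower : ∀ ψ, Elam ψ ≤ E ψ := by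
    intro ψ
    have key : lam * ∑ i, μ i * Real.log (∑ j, Real.exp ((ψ j - C i j) / lam)) ≤
        ∑ i, μ i * Finset.univ.sup' hne (fun j => ψ j - C i j) + lam * Real.log n := by
      calc _ = ∑ i, μ i * (lam * Real.log (∑ j, Real.exp ((ψ j - C i j) / lam))) := by
            rw [Finset.mul_sum]
            exact Finset.sum_congr rfl fun i _ => by ring
        _ ≤ ∑ i, μ i * (Finset.univ.sup' hne (fun j => ψ j - C i j) + lam * Real.log n) :=
            Finset.sum_le_sum fun i _ =>
              mul_le_mul_of_nonneg_left (mul_log_sum_exp_le hne _ hlam) (hμ0 i)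
        _ = _ := by
            simp only [mul_add, Finset.sum_add_distrib, ← Finset.sum_mul, hμ1, one_mul]
    rw [hE, hElam]
    linarith
  have upper : ∀ ψ, E ψ ≤ Elam ψ + lam * Real.log n := by
    intro ψ
    have key : ∑ i, μ i * Finset.univ.sup' hne (fun j => ψ j - C i j) ≤
        lam * ∑ i, μ i * Real.log (∑ j, Real.exp ((ψ j - C i j) / lam)) := by
      calc _ ≤ ∑ i, μ i * (lam * Real.log (∑ j, Real.exp ((ψ j - C i j) / lam))) :=
            Finset.sum_le_sum fun i _ =>
              mul_le_mul_of_nonneg_left (sup'_le_mul_log_sum_exp hne _ hlam) (hμ0 i)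
        _ = _ := by
            rw [Finset.mul_sum]
            exact Finset.sum_congr rfl fun i _ => by ring
    rw [hE, hElam]
    linarith
  rw [abs_of_nonneg (sub_nonneg.mpr (hminlam ψs))]
  linarith [lower ψs, hmin ψlam, upper ψlam]
end

section
/- Let m, n ≥ 1, μ ∈ ℝ^m and ν ∈ ℝⁿ be probability vectors, C = (c_{ij}) ∈ ℝ^{m×n}, λ > 0, and E_λ(ψ) = λ Σ_{i=1}^m μ_i log(Σ_{j=1}^n e^{(ψ_j − c_{ij})/λ}) − Σ_{j=1}^n ν_j ψ_j − λ log n. Let H = {ψ ∈ ℝⁿ : Σ_j ψ_j = 0} and let Π_H(z) = z − (1/n)(Σ_{j=1}^n z_j)·𝟙 denote the orthogonal projection onto H. Define FISTA iterates by ψ⁰ = z⁰ = 0, θ₀ = 1, and for t ≥ 0: z^{t+1} = Π_H(ψ^t − λ∇E_λ(ψ^t)), θ_{t+1} = (1 + √(1 + 4θ_t²))/2, ψ^{t+1} = z^{t+1} + ((θ_t − 1)/θ_{t+1})(z^{t+1} − z^t). Suppose ψ_λ* minimizes E_λ over H. Then for every ε > 0 and every integer t ≥ √(2‖ψ_λ*‖₂²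 / (λ ε)), one has E_λ(ψ^t) − E_λ(ψ_λ*) ≤ ε. -/
/-!
On the hyperplane `H` the projection does nothing: `E_λ` is invariant under translation along `𝟙`,
so its gradient is tangent to `H`, FISTA is plain accelerated gradient descent with step `λ`, and a
minimizer over `H` is a critical point of `E_λ`.

The bound is needed at the extrapolated points `ψ^t` rather than at the usual `z^t`. It follows
from the interpolation inequality
`f y + ⟨∇f y, x - y⟩ + (λ/2) ‖∇f x - ∇f y‖² ≤ f x`: with `u_t = θ_t ψ^t - (θ_t - 1) z^t - ψ*`,
the potential `θ_t² (f ψ^t - f ψ*) + ‖u_{t+1}‖² / (2λ)` is nonincreasing (`fista_step`), as one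
sees by adding `θ_t² - θ_t = θ_{t-1}²` times the inequality for the pair `(ψ^{t-1}, ψ^t)` and `θ_t`
times the one for `(ψ*, ψ^t)`. Here `u_{t+1} = u_t - λ θ_t ∇f(ψ^t)`. This gives
`θ_t² (f ψ^t - f ψ*) ≤ ‖ψ*‖² / (2λ)` (`fista_rate`), and `θ_t ≥ (t + 2) / 2`.

For `E_λ` the interpolation inequality needs no second derivatives: the Bregman divergence of a
scaled log-sum-exp is `λ` times the relative entropy of two softmax distributions, and
`p log (p / q) - p + q ≥ (p - q)² / 2` on `(0, 1]` (`sq_le_bregman_entropy`). Averaging over `μ`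
with Jensen's inequality concludes (`kantorovich_cocoercive`).
-/

/-! ### Softmax weights and the log-sum-exp function -/

/-- The softmax weights `e^{(ψ_j - c_j)/λ} / ∑_k e^{(ψ_k - c_k)/λ}`. -/
noncomputable def softmaxWeight {n : ℕ} (lam : ℝ) (c : Fin n → ℝ)
    (ψ : EuclideanSpace ℝ (Fin n)) (j : Fin n) : ℝ :=
  Real.exp ((ψ j - c j) / lam) / ∑ k, Real.exp ((ψ k - c k) / lam)

lemma sum_exp_pos {n : ℕ} (hn : 1 ≤ n) (v : Fin n → ℝ) : 0 < ∑ j, Real.exp (v j) :=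
  Finset.sum_pos (fun _ _ => Real.exp_pos _) ⟨⟨0, hn⟩, Finset.mem_univ _⟩

lemma softmaxWeight_pos {n : ℕ} (hn : 1 ≤ n) (lam : ℝ) (c : Fin n → ℝ)
    (ψ : EuclideanSpace ℝ (Fin n)) (j : Fin n) : 0 < softmaxWeight lam c ψ j :=
  div_pos (Real.exp_pos _) (sum_exp_pos hn _)

lemma sum_softmaxWeight {n : ℕ} (hn : 1 ≤ n) (lam : ℝ) (c : Fin n → ℝ)
    (ψ : EuclideanSpace ℝ (Fin n)) : ∑ j, softmaxWeight lam c ψ j = 1 := by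
  unfold softmaxWeight
  rw [← Finset.sum_div]
  exact div_self (sum_exp_pos hn _).ne'

lemma softmaxWeight_le_one {n : ℕ} (hn : 1 ≤ n) (lam : ℝ) (c : Fin n → ℝ)
    (ψ : EuclideanSpace ℝ (Fin n)) (j : Fin n) : softmaxWeight lam c ψ j ≤ 1 := by
  rw [← sum_softmaxWeight hn lam c ψ]
  exact Finset.single_le_sum (fun k _ => (softmaxWeight_pos hn lam c ψ k).le) (Finset.mem_univ j)

/-- Second-order upper bound `log r ≤ (r - 1) - (r - 1)² / 2` for `0 < r ≤ 1`. -/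
lemma log_le_of_le_one {r : ℝ} (h0 : 0 < r) (h1 : r ≤ 1) :
    Real.log r ≤ (r - 1) - (r - 1) ^ 2 / 2 := by
  have habs : |1 - r| < 1 := by rw [abs_lt]; constructor <;> linarith
  have hs := Real.hasSum_pow_div_log_of_abs_lt_one habs
  have h := sum_le_hasSum (Finset.range 2)
    (fun k _ => div_nonneg (pow_nonneg (by linarith : (0 : ℝ) ≤ 1 - r) _) (by positivity)) hs
  norm_num [Finset.sum_range_succ] at h
  nlinarith

/-- For `r = e^s ≥ 1` this is `s ≤ sinh s`. -/
lemma log_le_of_one_le {r : ℝ} (h1 : 1 ≤ r) :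
    Real.log r ≤ (r - 1) - (r - 1) ^ 2 / (2 * r) := by
  have h0 : 0 < r := by linarith
  have h := Real.self_le_sinh_iff.2 (Real.log_nonneg h1)
  rw [Real.sinh_log h0] at h
  have : (r - 1) - (r - 1) ^ 2 / (2 * r) = (r - r⁻¹) / 2 := by
    field_simp; ring
  linarith

/-- Strong convexity of the entropy `p ↦ p log p` on `(0, 1]` (its second derivative `1 / p` is at
least `1` there), written as a lower bound on its Bregman divergence. -/
lemma sq_le_bregman_entropy {p q : ℝ} (hp : 0 < p) (hp1 : p ≤ 1) (hq : 0 < q) (hq1 : q ≤ 1) :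
    (p - q) ^ 2 / 2 ≤ p * (Real.log p - Real.log q) - p + q := by
  have hr : 0 < q / p := div_pos hq hp
  have hlog : Real.log (q / p) = Real.log q - Real.log p := Real.log_div hq.ne' hp.ne'
  rcases le_total (q / p) 1 with h | h
  · have h1 := log_le_of_le_one hr h
    have h2 := mul_le_mul_of_nonneg_left h1 hp.le
    have e : p * ((q / p - 1) - (q / p - 1) ^ 2 / 2) = q - p - (p - q) ^ 2 / (2 * p) := by
      field_simp; ring
    have h3 : (p - q) ^ 2 / 2 ≤ (p - q) ^ 2 / (2 * p) :=
      div_le_div_of_nonneg_left (sq_nonneg _) (by linarith) (by linarith)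
    rw [e, hlog] at h2
    linarith
  · have h1 := log_le_of_one_le h
    have h2 := mul_le_mul_of_nonneg_left h1 hp.le
    have e : p * ((q / p - 1) - (q / p - 1) ^ 2 / (2 * (q / p)))
        = q - p - (p - q) ^ 2 / (2 * q) := by
      field_simp; ring
    have h3 : (p - q) ^ 2 / 2 ≤ (p - q) ^ 2 / (2 * q) :=
      div_le_div_of_nonneg_left (sq_nonneg _) (by linarith) (by linarith)
    rw [e, hlog] at h2
    linarith

/-- The Bregman divergence of the scaled log-sum-exp equals `λ` times the relative entropy of the
two softmax distributions, which dominates `λ / 2` times their squared Euclidean distance. -/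
lemma lse_cocoercive {n : ℕ} (hn : 1 ≤ n) {lam : ℝ} (hlam : 0 < lam) (c : Fin n → ℝ)
    (x y : EuclideanSpace ℝ (Fin n)) :
    lam * Real.log (∑ j, Real.exp ((y j - c j) / lam))
        + ∑ j, softmaxWeight lam c y j * (x j - y j)
        + lam / 2 * ∑ j, (softmaxWeight lam c x j - softmaxWeight lam c y j) ^ 2
      ≤ lam * Real.log (∑ j, Real.exp ((x j - c j) / lam)) := by
  have hlog : ∀ ψ : EuclideanSpace ℝ (Fin n), ∀ j, Real.log (softmaxWeight lam c ψ j)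
      = (ψ j - c j) / lam - Real.log (∑ k, Real.exp ((ψ k - c k) / lam)) := by
    intro ψ j
    unfold softmaxWeight
    rw [Real.log_div (Real.exp_pos _).ne' (sum_exp_pos hn _).ne', Real.log_exp]
  have key := Finset.sum_le_sum fun j (_ : j ∈ Finset.univ) => mul_le_mul_of_nonneg_left
    (sq_le_bregman_entropy (softmaxWeight_pos hn lam c y j) (softmaxWeight_le_one hn lam c y j)
      (softmaxWeight_pos hn lam c x j) (softmaxWeight_le_one hn lam c x j)) hlam.le
  set Lx := Real.log (∑ k, Real.exp ((x k - c k) / lam)) with hLx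
  set Ly := Real.log (∑ k, Real.exp ((y k - c k) / lam)) with hLy
  have e1 : ∑ j, lam * ((softmaxWeight lam c y j - softmaxWeight lam c x j) ^ 2 / 2)
      = lam / 2 * ∑ j, (softmaxWeight lam c x j - softmaxWeight lam c y j) ^ 2 := by
    rw [Finset.mul_sum]
    exact Finset.sum_congr rfl fun j _ => by ring
  have e2 : ∑ j, lam * (softmaxWeight lam c y j * (Real.log (softmaxWeight lam c y j)
        - Real.log (softmaxWeight lam c x j)) - softmaxWeight lam c y j + softmaxWeight lam c x j)
      = lam * Lx - lam * Ly - ∑ j, softmaxWeight lam c y j * (x j - y j) := by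
    have : ∀ j, lam * (softmaxWeight lam c y j * (Real.log (softmaxWeight lam c y j)
        - Real.log (softmaxWeight lam c x j)) - softmaxWeight lam c y j + softmaxWeight lam c x j)
        = (lam * Lx - lam * Ly - lam) * softmaxWeight lam c y j + lam * softmaxWeight lam c x j
          - softmaxWeight lam c y j * (x j - y j) := by
      intro j
      rw [hlog y j, hlog x j, ← hLx, ← hLy]
      field_simp
      ring
    rw [Finset.sum_congr rfl fun j _ => this j, Finset.sum_sub_distrib, Finset.sum_add_distrib,
      ← Finset.mul_sum, ← Finset.mul_sum, sum_softmaxWeight hn, sum_softmaxWeight hn]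
    ring
  rw [e1, e2] at key
  linarith

lemma hasFDerivAt_lse {n : ℕ} (hn : 1 ≤ n) {lam : ℝ} (hlam : 0 < lam) (c : Fin n → ℝ)
    (ψ : EuclideanSpace ℝ (Fin n)) :
    HasFDerivAt (fun ψ : EuclideanSpace ℝ (Fin n) =>
        lam * Real.log (∑ j, Real.exp ((ψ j - c j) / lam)))
      (∑ j, softmaxWeight lam c ψ j • (EuclideanSpace.proj j : EuclideanSpace ℝ (Fin n) →L[ℝ] ℝ))
      ψ := by
  have hc : ∀ j, HasFDerivAt (fun ψ : EuclideanSpace ℝ (Fin n) => Real.exp ((ψ j - c j) / lam))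
      (Real.exp ((ψ j - c j) / lam) • (lam⁻¹ •
        (EuclideanSpace.proj j : EuclideanSpace ℝ (Fin n) →L[ℝ] ℝ))) ψ := by
    intro j
    have h := (((EuclideanSpace.proj j : EuclideanSpace ℝ (Fin n) →L[ℝ] ℝ).hasFDerivAt
      (x := ψ)).sub_const (c j)).const_mul lam⁻¹
    have h' := h.exp
    simpa [div_eq_inv_mul] using h'
  have hs := HasFDerivAt.fun_sum fun j (_ : j ∈ Finset.univ) => hc j
  have hl := (hs.log (sum_exp_pos hn _).ne').const_mul lam
  refine hl.congr_fderiv ?_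
  ext v
  simp only [softmaxWeight, sum_apply, smul_apply, smul_eq_mul, Finset.mul_sum]
  refine Finset.sum_congr rfl fun j _ => ?_
  field_simp

/-! ### The smoothed Kantorovich functional -/

/-- The gradient of `E_λ`: the `j`-th coordinate is the mass that the softmax assignment sends to
`j`, minus the target weight `ν_j`. -/
noncomputable def kantorovichGrad {m n : ℕ} (μ : Fin m → ℝ) (ν : Fin n → ℝ)
    (C : Fin m → Fin n → ℝ) (lam : ℝ) (ψ : EuclideanSpace ℝ (Fin n)) :
    EuclideanSpace ℝ (Fin n) :=
  WithLp.toLp 2 fun j => ∑ i, μ i * softmaxWeight lam (C i) ψ j - ν j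

lemma inner_kantorovichGrad {m n : ℕ} (μ : Fin m → ℝ) (ν : Fin n → ℝ)
    (C : Fin m → Fin n → ℝ) (lam : ℝ) (ψ v : EuclideanSpace ℝ (Fin n)) :
    inner ℝ (kantorovichGrad μ ν C lam ψ) v
      = ∑ i, μ i * ∑ j, softmaxWeight lam (C i) ψ j * v j - ∑ j, ν j * v j := by
  simp only [PiLp.inner_apply, kantorovichGrad, RCLike.inner_apply, conj_trivial, mul_sub,
    Finset.sum_sub_distrib, Finset.mul_sum]
  congr 1
  · rw [Finset.sum_comm]
    exact Finset.sum_congr rfl fun i _ => Finset.sum_congr rfl fun j _ => by ring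
  · exact Finset.sum_congr rfl fun j _ => by ring

section
variable {m n : ℕ} (hn : 1 ≤ n) (μ : Fin m → ℝ) (ν : Fin n → ℝ)
    (C : Fin m → Fin n → ℝ) {lam : ℝ} (hlam : 0 < lam)
    (Elam : EuclideanSpace ℝ (Fin n) → ℝ)
    (hElam : ∀ ψ, Elam ψ =
      lam * ∑ i, μ i * Real.log (∑ j, Real.exp ((ψ j - C i j) / lam))
        - ∑ j, ν j * ψ j - lam * Real.log n)
include hn hlam hElam

lemma gradient_kantorovich (ψ : EuclideanSpace ℝ (Fin n)) :
    HasGradientAt Elam (kantorovichGrad μ ν C lam ψ) ψ := by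
  rw [hasGradientAt_iff_hasFDerivAt]
  have h1 := HasFDerivAt.fun_sum fun i (_ : i ∈ Finset.univ) =>
    (hasFDerivAt_lse hn hlam (C i) ψ).const_mul (μ i)
  have h2 := HasFDerivAt.fun_sum fun j (_ : j ∈ Finset.univ) =>
    ((EuclideanSpace.proj j : EuclideanSpace ℝ (Fin n) →L[ℝ] ℝ).hasFDerivAt
      (x := ψ)).const_mul (ν j)
  have h := (h1.sub h2).sub_const (lam * Real.log n)
  refine (h.congr_of_eventuallyEq (Filter.Eventually.of_forall fun φ => ?_)).congr_fderiv ?_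
  · simp only [hElam, Pi.sub_apply, PiLp.proj_apply]
    congr 2
    rw [Finset.mul_sum]
    exact Finset.sum_congr rfl fun i _ => by ring
  · ext v
    rw [InnerProductSpace.toDual_apply_apply, inner_kantorovichGrad]
    simp [sum_apply]

/-- `E_λ` is convex with `1/λ`-Lipschitz gradient, in the form of the interpolation inequality
between two points. -/
lemma kantorovich_cocoercive (hμ0 : ∀ i, 0 ≤ μ i) (hμ1 : ∑ i, μ i = 1)
    (x y : EuclideanSpace ℝ (Fin n)) :
    Elam y + inner ℝ (kantorovichGrad μ ν C lam y) (x - y)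
      + lam / 2 * ‖kantorovichGrad μ ν C lam x - kantorovichGrad μ ν C lam y‖ ^ 2 ≤ Elam x := by
  have hnorm : ‖kantorovichGrad μ ν C lam x - kantorovichGrad μ ν C lam y‖ ^ 2
      ≤ ∑ i, μ i * ∑ j, (softmaxWeight lam (C i) x j - softmaxWeight lam (C i) y j) ^ 2 := by
    rw [EuclideanSpace.real_norm_sq_eq]
    simp only [Finset.mul_sum]
    rw [Finset.sum_comm]
    refine Finset.sum_le_sum fun j _ => ?_
    -- Jensen's inequality for the square, with the probability weights `μ`
    have hJ := (even_two.convexOn_pow (𝕜 := ℝ)).map_sum_le (t := Finset.univ) (w := μ)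
      (p := fun i => softmaxWeight lam (C i) x j - softmaxWeight lam (C i) y j)
      (fun i _ => hμ0 i) hμ1 (fun i _ => Set.mem_univ _)
    simp only [smul_eq_mul] at hJ
    refine le_trans (le_of_eq ?_) hJ
    simp only [kantorovichGrad, PiLp.sub_apply, mul_sub, Finset.sum_sub_distrib]
    ring
  have key := Finset.sum_le_sum fun i (_ : i ∈ Finset.univ) =>
    mul_le_mul_of_nonneg_left (lse_cocoercive hn hlam (C i) x y) (hμ0 i)
  simp only [mul_add, Finset.sum_add_distrib] at key
  have e : ∀ ψ : EuclideanSpace ℝ (Fin n),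
      ∑ i, μ i * (lam * Real.log (∑ j, Real.exp ((ψ j - C i j) / lam)))
        = lam * ∑ i, μ i * Real.log (∑ j, Real.exp ((ψ j - C i j) / lam)) := by
    intro ψ
    rw [Finset.mul_sum]
    exact Finset.sum_congr rfl fun i _ => by ring
  have e2 : ∑ i, μ i * (lam / 2 *
        ∑ j, (softmaxWeight lam (C i) x j - softmaxWeight lam (C i) y j) ^ 2)
      = lam / 2 * ∑ i, μ i *
        ∑ j, (softmaxWeight lam (C i) x j - softmaxWeight lam (C i) y j) ^ 2 := by
    rw [Finset.mul_sum]
    exact Finset.sum_congr rfl fun i _ => by ring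
  rw [e x, e y, e2] at key
  have hnorm' := mul_le_mul_of_nonneg_left hnorm (by positivity : 0 ≤ lam / 2)
  rw [hElam x, hElam y, inner_kantorovichGrad]
  have e3 : ∑ j, ν j * (x - y) j = ∑ j, ν j * x j - ∑ j, ν j * y j := by
    simp only [PiLp.sub_apply, mul_sub, Finset.sum_sub_distrib]
  rw [e3]
  simp only [PiLp.sub_apply]
  linarith

/-- `E_λ` does not change along `𝟙`, because both marginals have total mass one. -/
lemma kantorovich_shift (hμ1 : ∑ i, μ i = 1) (hν1 : ∑ j, ν j = 1)
    (φ φ' : EuclideanSpace ℝ (Fin n)) (a : ℝ) (h : ∀ j, φ' j = φ j + a) :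
    Elam φ' = Elam φ := by
  have hl : ∀ i, Real.log (∑ j, Real.exp ((φ' j - C i j) / lam))
      = a / lam + Real.log (∑ j, Real.exp ((φ j - C i j) / lam)) := by
    intro i
    have : ∑ j, Real.exp ((φ' j - C i j) / lam)
        = Real.exp (a / lam) * ∑ j, Real.exp ((φ j - C i j) / lam) := by
      rw [Finset.mul_sum]
      refine Finset.sum_congr rfl fun j _ => ?_
      rw [h j, ← Real.exp_add]
      congr 1
      ring
    rw [this, Real.log_mul (Real.exp_pos _).ne' (sum_exp_pos hn _).ne', Real.log_exp]
  rw [hElam, hElam]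
  simp only [hl]
  simp only [h, mul_add, Finset.sum_add_distrib, ← Finset.sum_mul, hμ1, hν1]
  field_simp
  ring

/-- By translation invariance a minimizer over the hyperplane is a global minimizer, hence a
critical point. -/
lemma kantorovichGrad_minimizer (hμ1 : ∑ i, μ i = 1) (hν1 : ∑ j, ν j = 1)
    (ψlam : EuclideanSpace ℝ (Fin n))
    (hmin : ∀ φ : EuclideanSpace ℝ (Fin n), (∑ j, φ j = 0) → Elam ψlam ≤ Elam φ) :
    kantorovichGrad μ ν C lam ψlam = 0 := by
  have hglob : ∀ φ, Elam ψlam ≤ Elam φ := by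
    intro φ
    have hn0 : (n : ℝ) ≠ 0 := by positivity
    let φ' : EuclideanSpace ℝ (Fin n) := WithLp.toLp 2 fun j => φ j + -((∑ k, φ k) / n)
    rw [← kantorovich_shift hn μ ν C hlam Elam hElam hμ1 hν1 φ φ' (-((∑ k, φ k) / n))
      (fun j => rfl)]
    apply hmin
    simp only [φ', Finset.sum_add_distrib, Finset.sum_const, Finset.card_univ, Fintype.card_fin,
      nsmul_eq_mul]
    field_simp
    ring
  have hg := (hasGradientAt_iff_hasFDerivAt.1
    (gradient_kantorovich hn μ ν C hlam Elam hElam ψlam))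
  have h0 := IsLocalMin.hasFDerivAt_eq_zero (Filter.Eventually.of_forall hglob) hg
  simpa using h0

end

lemma sum_kantorovichGrad {m n : ℕ} (hn : 1 ≤ n) (μ : Fin m → ℝ) (ν : Fin n → ℝ)
    (hμ1 : ∑ i, μ i = 1) (hν1 : ∑ j, ν j = 1)
    (C : Fin m → Fin n → ℝ) (lam : ℝ) (ψ : EuclideanSpace ℝ (Fin n)) :
    ∑ j, kantorovichGrad μ ν C lam ψ j = 0 := by
  simp only [kantorovichGrad, Finset.sum_sub_distrib, hν1]
  rw [Finset.sum_comm]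
  simp only [← Finset.mul_sum, sum_softmaxWeight hn, mul_one, hμ1, sub_self]

/-! ### Accelerated gradient descent in an inner product space -/

lemma fista_theta {θ : ℕ → ℝ} (hθ0 : θ 0 = 1)
    (hθ : ∀ t, θ (t + 1) = (1 + Real.sqrt (1 + 4 * θ t ^ 2)) / 2) (t : ℕ) :
    ((t : ℝ) + 2) / 2 ≤ θ t ∧ θ (t + 1) ^ 2 - θ (t + 1) = θ t ^ 2 := by
  refine ⟨?_, ?_⟩
  · induction t with
    | zero => simp [hθ0]
    | succ t ih =>
      have : 2 * θ t ≤ Real.sqrt (1 + 4 * θ t ^ 2) := Real.le_sqrt_of_sq_le (by nlinarith)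
      rw [hθ t]
      push_cast
      linarith
  · have h := Real.sq_sqrt (by positivity : 0 ≤ 1 + 4 * θ t ^ 2)
    rw [hθ t]
    nlinarith

/-- One step of the potential argument. Here `x` is the gradient step taken from `y₀`, the numbers
`f`, `f₀`, `fs` and the vectors `g`, `g₀`, `0` are the values and gradients at `y`, `y₀`, `xs`, and
`h1`, `h2` are the interpolation inequalities for the pairs `(xs, y)` and `(y₀, y)`. -/
lemma fista_step {E : Type*} [NormedAddCommGroup E] [InnerProductSpace ℝ E]
    {lam θ f f₀ fs : ℝ} (hlam : 0 < lam) (hθ : 1 ≤ θ) (g g₀ x y y₀ xs : E)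
    (hx : x = y₀ - lam • g₀)
    (h1 : f + inner ℝ g (xs - y) + lam / 2 * ‖g‖ ^ 2 ≤ fs)
    (h2 : f + inner ℝ g (y₀ - y) + lam / 2 * ‖g₀ - g‖ ^ 2 ≤ f₀) :
    θ ^ 2 * (f - fs) + ‖θ • y - (θ - 1) • x - xs - (lam * θ) • g‖ ^ 2 / (2 * lam)
      ≤ (θ ^ 2 - θ) * (f₀ - fs) + ‖θ • y - (θ - 1) • x - xs‖ ^ 2 / (2 * lam) := by
  have hu : inner ℝ g (θ • y - (θ - 1) • x - xs)
      = -(inner ℝ g (xs - y)) - (θ - 1) * (inner ℝ g (y₀ - y) - lam * inner ℝ g g₀) := by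
    rw [hx]
    simp only [inner_sub_right, inner_smul_right]
    ring
  have hsq : ‖θ • y - (θ - 1) • x - xs - (lam * θ) • g‖ ^ 2 / (2 * lam)
      = ‖θ • y - (θ - 1) • x - xs‖ ^ 2 / (2 * lam)
        - θ * inner ℝ g (θ • y - (θ - 1) • x - xs) + lam / 2 * θ ^ 2 * ‖g‖ ^ 2 := by
    rw [norm_sub_sq_real, inner_smul_right, norm_smul, real_inner_comm, mul_pow, Real.norm_eq_abs,
      sq_abs]
    field_simp
  have hg : ‖g₀ - g‖ ^ 2 = ‖g₀‖ ^ 2 - 2 * inner ℝ g g₀ + ‖g‖ ^ 2 := by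
    rw [norm_sub_sq_real, real_inner_comm]
  rw [hsq, hu]
  rw [hg] at h2
  have a1 := mul_le_mul_of_nonneg_left h1 (by linarith : 0 ≤ θ)
  have a2 := mul_le_mul_of_nonneg_left h2 (by nlinarith : 0 ≤ θ ^ 2 - θ)
  have a3 : 0 ≤ (θ ^ 2 - θ) * (lam / 2 * ‖g₀‖ ^ 2) :=
    mul_nonneg (by nlinarith) (by positivity)
  nlinarith

/-- The accelerated rate holds at the extrapolated points `y t`, at which the gradients are
evaluated. -/
lemma fista_rate {E : Type*} [NormedAddCommGroup E] [InnerProductSpace ℝ E]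
    {lam : ℝ} (hlam : 0 < lam) (f : E → ℝ) (g : E → E)
    (hco : ∀ x y, f y + inner ℝ (g y) (x - y) + lam / 2 * ‖g x - g y‖ ^ 2 ≤ f x)
    (xs : E) (hxs : g xs = 0) (y x : ℕ → E) (θ : ℕ → ℝ)
    (hy0 : y 0 = 0) (hθ0 : θ 0 = 1)
    (hx : ∀ t, x (t + 1) = y t - lam • g (y t))
    (hθ : ∀ t, θ (t + 1) = (1 + Real.sqrt (1 + 4 * θ t ^ 2)) / 2)
    (hy : ∀ t, y (t + 1) = x (t + 1) + ((θ t - 1) / θ (t + 1)) • (x (t + 1) - x t)) (t : ℕ) :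
    θ t ^ 2 * (f (y t) - f xs) ≤ ‖xs‖ ^ 2 / (2 * lam) := by
  have hθ1 : ∀ t, 1 ≤ θ t := fun t => by
    have := (fista_theta hθ0 hθ t).1
    have h0 : (0 : ℝ) ≤ t := t.cast_nonneg
    linarith
  have hmin : ∀ z, f z + inner ℝ (g z) (xs - z) + lam / 2 * ‖g z‖ ^ 2 ≤ f xs := fun z => by
    simpa [hxs] using hco xs z
  have hpot : ∀ t, θ t ^ 2 * (f (y t) - f xs)
      + ‖θ t • y t - (θ t - 1) • x t - xs - (lam * θ t) • g (y t)‖ ^ 2 / (2 * lam)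
      ≤ ‖xs‖ ^ 2 / (2 * lam) := by
    intro t
    induction t with
    | zero =>
      -- since `θ₀ = 1`, the point preceding `y₀` has weight zero and may be `y₀` itself
      have h := fista_step hlam (hθ1 0) (g (y 0)) (g (y 0)) (y 0 - lam • g (y 0)) (y 0) (y 0) xs
        rfl (hmin (y 0)) (hco (y 0) (y 0))
      simpa [hθ0, hy0] using h
    | succ t ih =>
      have h := fista_step hlam (hθ1 (t + 1)) (g (y (t + 1))) (g (y t)) (x (t + 1)) (y (t + 1))
        (y t) xs (hx t) (hmin _) (hco _ _)
      have hθne : θ (t + 1) ≠ 0 := by linarith [hθ1 (t + 1)]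
      have hu : θ (t + 1) • y (t + 1) - (θ (t + 1) - 1) • x (t + 1) - xs
          = θ t • y t - (θ t - 1) • x t - xs - (lam * θ t) • g (y t) := by
        have e : θ (t + 1) • y (t + 1)
            = θ (t + 1) • x (t + 1) + (θ t - 1) • (x (t + 1) - x t) := by
          rw [hy t, smul_add, smul_smul, mul_div_cancel₀ _ hθne]
        rw [e, hx t]
        module
      rw [(fista_theta hθ0 hθ t).2] at h
      rw [hu] at h ⊢
      linarith
  have h1 := hpot t
  have h2 : 0 ≤ ‖θ t • y t - (θ t - 1) • x t - xs - (lam * θ t) • g (y t)‖ ^ 2 / (2 * lam) := by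
    positivity
  linarith


/-! ### Convergence for the smoothed Kantorovich functional -/

/-- (Corollary 9 of the paper.) FISTA applied to the smoothed Kantorovich
functional `E_λ` with step size `λ`, proximally projecting onto the hyperplane
`H = {ψ : ∑ j ψ_j = 0}`, satisfies `E_λ(ψ^t) − E_λ(ψ_λ*) ≤ ε` for every
`t ≥ √(2‖ψ_λ*‖² / (λ ε))`, where `ψ_λ*` minimizes `E_λ` over `H`. -/
theorem fista_convergence_smoothed_kantorovich
    (m n : ℕ) (hm : 1 ≤ m) (hn : 1 ≤ n)
    (μ : Fin m → ℝ) (ν : Fin n → ℝ)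
    (hμ0 : ∀ i, 0 ≤ μ i) (hμ1 : ∑ i, μ i = 1)
    (hν0 : ∀ j, 0 ≤ ν j) (hν1 : ∑ j, ν j = 1)
    (C : Fin m → Fin n → ℝ) (lam : ℝ) (hlam : 0 < lam)
    (Elam : EuclideanSpace ℝ (Fin n) → ℝ)
    (hElam : ∀ ψ, Elam ψ =
      lam * ∑ i, μ i * Real.log (∑ j, Real.exp ((ψ j - C i j) / lam))
        - ∑ j, ν j * ψ j - lam * Real.log n)
    -- `ψ_λ*` minimizes `E_λ` over the hyperplane `H = {ψ : ∑ j, ψ j = 0}`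
    (ψlam : EuclideanSpace ℝ (Fin n)) (hψlamH : ∑ j, ψlam j = 0)
    (hψlammin : ∀ φ : EuclideanSpace ℝ (Fin n), (∑ j, φ j = 0) → Elam ψlam ≤ Elam φ)
    -- the FISTA iterates
    (ψseq zseq : ℕ → EuclideanSpace ℝ (Fin n)) (θ : ℕ → ℝ)
    (hψ0 : ψseq 0 = 0) (hz0 : zseq 0 = 0) (hθ0 : θ 0 = 1)
    (hz : ∀ t j, zseq (t + 1) j =
      (ψseq t - lam • gradient Elam (ψseq t)) j -
        (1 / n) * ∑ k, (ψseq t - lam • gradient Elam (ψseq t)) k)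
    (hθ : ∀ t, θ (t + 1) = (1 + Real.sqrt (1 + 4 * θ t ^ 2)) / 2)
    (hψ : ∀ t, ψseq (t + 1) =
      zseq (t + 1) + ((θ t - 1) / θ (t + 1)) • (zseq (t + 1) - zseq t))
    (ε : ℝ) (hε : 0 < ε)
    (t : ℕ) (ht : Real.sqrt (2 * ‖ψlam‖ ^ 2 / (lam * ε)) ≤ t) :
    Elam (ψseq t) - Elam ψlam ≤ ε := by
  have hn0 : (n : ℝ) ≠ 0 := by positivity
  have hgrad : ∀ ψ, gradient Elam ψ = kantorovichGrad μ ν C lam ψ := fun ψ =>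
    (gradient_kantorovich hn μ ν C hlam Elam hElam ψ).gradient
  -- the sum in `hz` vanishes on the hyperplane: the gradient is already tangent to it
  have hzstep : ∀ t, ∑ j, ψseq t j = 0 →
      zseq (t + 1) = ψseq t - lam • kantorovichGrad μ ν C lam (ψseq t) := by
    intro t h
    ext j
    have hs : ∑ k, (ψseq t - lam • kantorovichGrad μ ν C lam (ψseq t)) k = 0 := by
      simp only [PiLp.sub_apply, PiLp.smul_apply, smul_eq_mul, Finset.sum_sub_distrib,
        ← Finset.mul_sum, h, sum_kantorovichGrad hn μ ν hμ1 hν1, mul_zero, sub_zero]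
    rw [hz t j, hgrad, hs, mul_zero, sub_zero]
  have hH : ∀ t, ∑ j, ψseq t j = 0 ∧ ∑ j, zseq t j = 0 := by
    intro t
    induction t with
    | zero => simp [hψ0, hz0]
    | succ t ih =>
      have hz1 : ∑ j, zseq (t + 1) j = 0 := by
        rw [hzstep t ih.1]
        simp only [PiLp.sub_apply, PiLp.smul_apply, smul_eq_mul, Finset.sum_sub_distrib,
          ← Finset.mul_sum, ih.1, sum_kantorovichGrad hn μ ν hμ1 hν1, mul_zero, sub_zero]
      refine ⟨?_, hz1⟩
      rw [hψ t]
      simp only [PiLp.add_apply, PiLp.sub_apply, PiLp.smul_apply, smul_eq_mul,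
        Finset.sum_add_distrib, ← Finset.mul_sum, Finset.sum_sub_distrib, hz1, ih.2, sub_zero,
        mul_zero, add_zero]
  have hrate := fista_rate hlam Elam (kantorovichGrad μ ν C lam)
    (kantorovich_cocoercive hn μ ν C hlam Elam hElam hμ0 hμ1) ψlam
    (kantorovichGrad_minimizer hn μ ν C hlam Elam hElam hμ1 hν1 ψlam hψlammin)
    ψseq zseq θ hψ0 hθ0 (fun t => hzstep t (hH t).1) hθ hψ t
  have hθt := (fista_theta hθ0 hθ t).1
  have ht0 : (0 : ℝ) ≤ t := t.cast_nonneg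
  rw [Real.sqrt_le_left ht0, div_le_iff₀ (by positivity)] at ht
  rw [le_div_iff₀ (by positivity)] at hrate
  by_contra! hcon
  have hθsq : ((t : ℝ) ^ 2 + 4) / 4 ≤ θ t ^ 2 := by nlinarith
  have h1 : θ t ^ 2 * ε ≤ θ t ^ 2 * (Elam (ψseq t) - Elam ψlam) :=
    mul_le_mul_of_nonneg_left hcon.le (sq_nonneg _)
  have h2 := mul_le_mul_of_nonneg_right hθsq hε.le
  have h3 := mul_le_mul_of_nonneg_right (h2.trans h1) (by positivity : 0 ≤ 2 * lam)
  have h4 : 0 < lam * ε := by positivity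
  nlinarith
end
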